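/- For every positive integer i it holds that φ^{−2} < −w_−(i) < 1, and moreover φ·i ≤ w_+(i) < (φ²+1)·i and i ≤ η_i < (φ²+1)·i. -/

import Mathlib

open Real

noncomputable def phi : ℝ := (1 + Real.sqrt 5) / 2

noncomputable def W (i : ℕ) : ℕ → ℤ
  | 0 => ⌊phi ^ 2 * (⌊phi * i⌋ : ℝ)⌋ - ⌊phi * (⌊phi * i⌋ : ℝ)⌋
  | 1 => ⌊phi * (⌊phi * i⌋ : ℝ)⌋
  | 2 => ⌊phi ^ 2 * (⌊phi * i⌋ : ℝ)⌋
  | (k + 3) => W i (k + 2) + W i (k + 1)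

noncomputable def wplus (i : ℕ) : ℝ := phi⁻¹ ^ 2 * (W i 1 : ℝ) + phi⁻¹ * (W i 2 : ℝ)

noncomputable def wminus (i : ℕ) : ℝ := phi ^ 2 * (W i 1 : ℝ) - phi * (W i 2 : ℝ)

noncomputable def eta (i : ℕ) : ℝ := -(wplus i * wminus i)


theorem phi_sq : phi ^ 2 = phi + 1 := Real.goldenRatio_sq

theorem phi_lo : 1.618 < phi := by
  unfold phi
  have : (2.236 : ℝ) < Real.sqrt 5 := Real.lt_sqrt_of_sq_lt (by norm_num)
  linarith

theorem phi_hi : phi < 1.6181 := by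
  unfold phi
  have : Real.sqrt 5 < (2.2362 : ℝ) := (Real.sqrt_lt' (by norm_num)).2 (by norm_num)
  linarith

theorem phi_inv : phi⁻¹ = phi - 1 := by
  have h := phi_sq
  have h1 := phi_lo
  exact inv_eq_of_mul_eq_one_right (by nlinarith)

theorem key (i : ℕ) (hi : 0 < i) : ∃ f : ℝ, 0 < f ∧ f < 1 ∧ f = phi * i - ⌊phi * i⌋ ∧
    wminus i = f * (phi - 1) - 1 ∧ wplus i = (phi + 2) * i - 1 - f * phi := by
  have h2 := phi_sq
  have hlo := phi_lo
  have hhi := phi_hi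
  have hirr : Irrational (phi * i) := by
    have : Irrational phi := Real.goldenRatio_irrational
    exact this.mul_natCast hi.ne'
  have hle := Int.floor_le (phi * i)
  have hlt := Int.lt_floor_add_one (phi * i)
  have hne := hirr.ne_int ⌊phi * i⌋
  have hpos : (⌊phi * i⌋ : ℝ) < phi * i := lt_of_le_of_ne hle hne.symm
  set m : ℤ := ⌊phi * i⌋ with hm
  obtain ⟨f, hf⟩ : ∃ f : ℝ, f = phi * i - m := ⟨_, rfl⟩
  have hf0 : 0 < f := by linarith
  have hf1 : f < 1 := by linarith
  have hpm : phi * m = m + i - f * (phi - 1) := by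
    have : (m : ℝ) = phi * i - f := by linarith
    rw [this]
    linear_combination (i : ℝ) * h2
  have hfp : 0 < f * (phi - 1) := mul_pos hf0 (by linarith)
  have hfp1 : f * (phi - 1) < 1 := by nlinarith
  have hA : W i 1 = m + i - 1 := by
    simp only [W]
    rw [← hm, Int.floor_eq_iff]
    push_cast
    constructor <;> linarith
  have hB : W i 2 = 2 * m + i - 1 := by
    simp only [W]
    rw [← hm, Int.floor_eq_iff, h2]
    push_cast
    constructor <;> linarith
  refine ⟨f, hf0, hf1, hf, ?_, ?_⟩
  · rw [wminus, hA, hB]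
    push_cast
    have hmm : (m : ℝ) = phi * i - f := by linarith
    rw [hmm]
    have h3 : phi ^ 3 = 2 * phi + 1 := by linear_combination (phi + 1) * h2
    linear_combination (i : ℝ) * h3 - ((i : ℝ) + f + 1) * h2
  · rw [wplus, hA, hB, phi_inv]
    push_cast
    have hmm : (m : ℝ) = phi * i - f := by linarith
    rw [hmm]
    have h3 : phi ^ 3 = 2 * phi + 1 := by linear_combination (phi + 1) * h2
    linear_combination (i : ℝ) * h3 + ((i : ℝ) - f - 1) * h2

/-- `φ⁻² < −w₋(i) < 1`, `φ·i ≤ w₊(i) < (φ²+1)·i` and `i ≤ η_i < (φ²+1)·i`. -/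
theorem wplus_wminus_eta_bounds (i : ℕ) (hi : 0 < i) :
    (phi⁻¹ ^ 2 < -wminus i ∧ -wminus i < 1) ∧
      (phi * i ≤ wplus i ∧ wplus i < (phi ^ 2 + 1) * i) ∧
      ((i : ℝ) ≤ eta i ∧ eta i < (phi ^ 2 + 1) * i) := by
  have h2 := phi_sq
  have hlo := phi_lo
  have hhi := phi_hi
  obtain ⟨f, hf0, hf1, hf, hwm, hwp⟩ := key i hi
  have hfp : 0 < f * (phi - 1) := mul_pos hf0 (by linarith)
  have hfp1 : f * (phi - 1) < phi - 1 := by nlinarith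
  have hfq : f * phi < phi := by nlinarith
  have hi1 : (1 : ℝ) ≤ i := by exact_mod_cast hi
  have hb : phi⁻¹ ^ 2 = 2 - phi := by
    rw [phi_inv]
    linear_combination h2
  rw [eta, hb, hwm, hwp, h2]
  have hu : (0 : ℝ) < (phi + 2) * i - 1 - f * phi := by nlinarith
  refine ⟨⟨by linarith, by linarith⟩, ⟨?_, by nlinarith⟩, ?_, by nlinarith⟩
  · rcases Nat.lt_or_ge i 2 with h | h
    · obtain rfl : i = 1 := by omega
      have hfl : ⌊phi * (1 : ℕ)⌋ = 1 := by
        rw [Int.floor_eq_iff]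
        push_cast
        constructor <;> linarith
      rw [hfl] at hf
      push_cast at hf ⊢
      rw [hf]
      nlinarith
    · have : (2 : ℝ) ≤ i := by exact_mod_cast h
      linarith
  · rcases Nat.lt_or_ge i 3 with h | h
    · obtain rfl | rfl : i = 1 ∨ i = 2 := by omega
      · have hfl : ⌊phi * (1 : ℕ)⌋ = 1 := by
          rw [Int.floor_eq_iff]
          push_cast
          constructor <;> linarith
        rw [hfl] at hf
        push_cast at hf ⊢
        have e1 : f * phi = 1 := by rw [hf]; linear_combination h2
        have e2 : f * (phi - 1) = 2 - phi := by rw [hf]; linear_combination h2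
        rw [e1, e2]
        nlinarith
      · have hfl : ⌊phi * (2 : ℕ)⌋ = 3 := by
          rw [Int.floor_eq_iff]
          push_cast
          constructor <;> linarith
        rw [hfl] at hf
        push_cast at hf ⊢
        have e1 : f * phi = 2 - phi := by rw [hf]; linear_combination 2 * h2
        have e2 : f * (phi - 1) = 5 - 3 * phi := by rw [hf]; linear_combination 2 * h2
        rw [e1, e2]
        nlinarith
    · have h3 : (3 : ℝ) ≤ i := by exact_mod_cast h
      have ha : (phi + 2) * i - 1 - phi ≤ (phi + 2) * i - 1 - f * phi := by linarith
      have hc : 2 - phi ≤ 1 - f * (phi - 1) := by linarith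
      have hp := mul_le_mul ha hc (by linarith) hu.le
      have he : ((phi + 2) * i - 1 - phi) * (2 - phi) = (3 - phi) * i - 1 := by
        linear_combination (1 - (i : ℝ)) * h2
      nlinarith
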